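/- arXiv:0811.3530 — 4 statements merged into one kernel-verified Lean document; each statement's English description precedes it below -/
import Mathlib

section
/- Let Γ ∈ ℝ^{p×p} be a connected interconnection and let r ∈ ℝ^p satisfy rᵀΓ = 0 and rᵀ1 = 1. Then the matrix Γ − 1rᵀ is Hurwitz: every eigenvalue of Γ − 1rᵀ (over ℂ) has strictly negative real part; equivalently, exp(t(Γ − 1rᵀ)) → 0 as t → ∞. -/
open Matrix Filter Topology

/-- `Γ` is an interconnection: off-diagonal entries are nonnegative and each row sums to zero. -/
def IsInterconnection {p : ℕ} (Γ : Matrix (Fin p) (Fin p) ℝ) : Prop :=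
  (∀ i j, i ≠ j → 0 ≤ Γ i j) ∧ ∀ i, ∑ j, Γ i j = 0

/-- `Γ` is a connected interconnection. -/
def IsConnectedInterconnection {p : ℕ} (Γ : Matrix (Fin p) (Fin p) ℝ) : Prop :=
  IsInterconnection Γ ∧
    ∃ k : Fin p, ∀ i : Fin p, Relation.ReflTransGen (fun a b => 0 < Γ a b) i k

theorem aux_pow_tendsto {A : Type*} [NormedRing A] [NormedAlgebra ℂ A] [CompleteSpace A]
    [Nontrivial A] (a : A) (h : ∀ z ∈ spectrum ℂ a, ‖z‖ < 1) :
    Tendsto (fun n : ℕ => a ^ n) atTop (𝓝 0) := by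
  have h1 : spectralRadius ℂ a < ((1 : NNReal) : ENNReal) :=
    spectrum.spectralRadius_lt_of_forall_lt a (fun z hz => by exact_mod_cast h z hz)
  obtain ⟨q, hq1, hq2⟩ := ENNReal.lt_iff_exists_nnreal_btwn.mp h1
  have hq2' : q < 1 := by exact_mod_cast hq2
  have h2 := (spectrum.pow_nnnorm_pow_one_div_tendsto_nhds_spectralRadius a).eventually_lt_const hq1
  rw [tendsto_zero_iff_norm_tendsto_zero]
  have h3 : Tendsto (fun n : ℕ => (q : ℝ) ^ n) atTop (𝓝 0) :=
    tendsto_pow_atTop_nhds_zero_of_lt_one q.2 (by exact_mod_cast hq2')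
  refine squeeze_zero' (Eventually.of_forall fun n => norm_nonneg _) ?_ h3
  filter_upwards [h2, eventually_gt_atTop 0] with n hn hn0
  have hn0' : (0 : ℝ) < n := by exact_mod_cast hn0
  have h4 : (‖a ^ n‖₊ : ENNReal) ≤ (q : ENNReal) ^ n := by
    have h5 := ENNReal.rpow_le_rpow hn.le hn0'.le
    rw [← ENNReal.rpow_mul, one_div, inv_mul_cancel₀ hn0'.ne', ENNReal.rpow_one,
      ENNReal.rpow_natCast] at h5
    exact h5
  have h6 : ‖a ^ n‖₊ ≤ q ^ n := by exact_mod_cast h4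
  exact_mod_cast h6

theorem aux_exp_tendsto {A : Type*} [NormedRing A] [NormedAlgebra ℂ A] [CompleteSpace A]
    (a : A) (h : Tendsto (fun n : ℕ => NormedSpace.exp a ^ n) atTop (𝓝 0)) :
    Tendsto (fun t : ℝ => NormedSpace.exp ((t : ℂ) • a)) atTop (𝓝 0) := by
  let : NormedAlgebra ℚ A := NormedAlgebra.restrictScalars ℚ ℂ A
  have hc : Continuous (fun t : ℝ => NormedSpace.exp ((t : ℂ) • a)) := by
    have : Continuous (NormedSpace.exp : A → A) := NormedSpace.exp_continuous
    fun_prop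
  obtain ⟨C, hC⟩ := (isCompact_Icc (a := (0 : ℝ)) (b := 1)).exists_bound_of_continuousOn
    hc.continuousOn
  rw [tendsto_zero_iff_norm_tendsto_zero] at h ⊢
  have h2 : Tendsto (fun t : ℝ => ‖NormedSpace.exp a ^ ⌊t⌋₊‖ * C) atTop (𝓝 0) := by
    simpa using (h.comp (tendsto_nat_floor_atTop (α := ℝ))).mul_const C
  refine squeeze_zero' (Eventually.of_forall fun n => norm_nonneg _) ?_ h2
  filter_upwards [eventually_ge_atTop 0] with t ht
  have e : (t : ℂ) • a = ⌊t⌋₊ • a + ((t - ⌊t⌋₊ : ℝ) : ℂ) • a := by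
    rw [← Nat.cast_smul_eq_nsmul ℂ, ← add_smul]
    congr 1
    push_cast
    ring
  have hcomm : Commute (⌊t⌋₊ • a) (((t - ⌊t⌋₊ : ℝ) : ℂ) • a) :=
    ((Commute.refl a).smul_right _).smul_left _
  rw [e, NormedSpace.exp_add_of_commute hcomm, NormedSpace.exp_nsmul]
  refine (norm_mul_le _ _).trans ?_
  gcongr
  apply hC
  exact ⟨by linarith [Nat.floor_le ht], by linarith [Nat.lt_floor_add_one t]⟩

section
attribute [local instance] Matrix.linftyOpNormedRing Matrix.linftyOpNormedAlgebra

theorem aux_eigvec {p : ℕ} {B : Matrix (Fin p) (Fin p) ℂ} {μ : ℂ} (h : μ ∈ spectrum ℂ B) :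
    ∃ v : Fin p → ℂ, v ≠ 0 ∧ B *ᵥ v = μ • v := by
  rw [← Matrix.spectrum_toLin', ← Module.End.hasEigenvalue_iff_mem_spectrum] at h
  obtain ⟨v, hv⟩ := h.exists_hasEigenvector
  exact ⟨v, hv.2, by simpa using hv.apply_eq_smul⟩

theorem aux_mem_spectrum {p : ℕ} {B : Matrix (Fin p) (Fin p) ℂ} {μ : ℂ} {v : Fin p → ℂ}
    (hv : v ≠ 0) (h : B *ᵥ v = μ • v) : μ ∈ spectrum ℂ B := by
  rw [← Matrix.spectrum_toLin', ← Module.End.hasEigenvalue_iff_mem_spectrum]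
  apply Module.End.hasEigenvalue_of_hasEigenvector (x := v)
  exact ⟨Module.End.mem_eigenspace_iff.mpr (by simpa using h), hv⟩

theorem aux_exp_mulVec {p : ℕ} {B : Matrix (Fin p) (Fin p) ℂ} {μ : ℂ} {v : Fin p → ℂ}
    (h : B *ᵥ v = μ • v) : NormedSpace.exp B *ᵥ v = Complex.exp μ • v := by
  let : NormedAlgebra ℚ (Matrix (Fin p) (Fin p) ℂ) := NormedAlgebra.restrictScalars ℚ ℂ _
  have h1 : SemiconjBy (vecMulVec v (fun _ : Fin p => (1 : ℂ))) (diagonal fun _ => μ) B := by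
    unfold SemiconjBy
    rw [mul_vecMulVec, h]
    ext i j
    simp [vecMulVec_apply, mul_comm]
  have hd := Matrix.exp_diagonal (fun _ : Fin p => μ)
  have h2 : vecMulVec v (fun _ : Fin p => (1 : ℂ)) * diagonal (NormedSpace.exp fun _ => μ)
      = NormedSpace.exp B * vecMulVec v (fun _ : Fin p => (1 : ℂ)) :=
    (congrArg (vecMulVec v (fun _ : Fin p => (1 : ℂ)) * ·) hd.symm).trans h1.exp_right
  rw [mul_vecMulVec] at h2
  ext i
  have h3 := congrFun (congrFun h2 i) i
  simp only [mul_diagonal, vecMulVec_apply, mul_one, Pi.coe_exp] at h3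
  rw [← h3, Complex.exp_eq_exp_ℂ]
  simp [mul_comm]

theorem aux_spec_exp {p : ℕ} {B : Matrix (Fin p) (Fin p) ℂ}
    (hB : ∀ μ ∈ spectrum ℂ B, μ.re < 0) :
    ∀ z ∈ spectrum ℂ (NormedSpace.exp B), ‖z‖ < 1 := by
  let : NormedAlgebra ℚ (Matrix (Fin p) (Fin p) ℂ) := NormedAlgebra.restrictScalars ℚ ℂ _
  intro z hz
  rw [← Matrix.spectrum_toLin', ← Module.End.hasEigenvalue_iff_mem_spectrum] at hz
  have hcomm : Commute (Matrix.toLin' (NormedSpace.exp B)) (Matrix.toLin' B) := by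
    have : NormedSpace.exp B * B = B * NormedSpace.exp B := ((Commute.refl B).exp_left).eq
    unfold Commute SemiconjBy
    rw [Module.End.mul_eq_comp, Module.End.mul_eq_comp, ← Matrix.toLin'_mul, ← Matrix.toLin'_mul,
      this]
  have hm : Set.MapsTo (Matrix.toLin' B) (Module.End.eigenspace (Matrix.toLin' (NormedSpace.exp B)) z)
     (Module.End.eigenspace (Matrix.toLin' (NormedSpace.exp B)) z) :=
    Module.End.mapsTo_genEigenspace_of_comm hcomm z 1
  have : Nontrivial (Module.End.eigenspace (Matrix.toLin' (NormedSpace.exp B)) z) :=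
    Submodule.nontrivial_iff_ne_bot.mpr hz
  obtain ⟨μ, hμ⟩ := Module.End.exists_eigenvalue ((Matrix.toLin' B).restrict hm)
  obtain ⟨w, hw⟩ := hμ.exists_hasEigenvector
  have hw1 := congrArg Subtype.val hw.apply_eq_smul
  have hw0 : (w : Fin p → ℂ) ≠ 0 := fun h => hw.2 (Subtype.ext h)
  have hw2 : B *ᵥ (w : Fin p → ℂ) = μ • (w : Fin p → ℂ) := hw1
  have hre := hB μ (aux_mem_spectrum hw0 hw2)
  have hw3 := aux_exp_mulVec hw2
  have hw4 : NormedSpace.exp B *ᵥ (w : Fin p → ℂ) = z • (w : Fin p → ℂ) := by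
    simpa using Module.End.mem_eigenspace_iff.mp w.2
  have hz : z = Complex.exp μ := smul_left_injective ℂ hw0 (hw4.symm.trans hw3)
  rw [hz, Complex.norm_exp]
  simpa using hre

theorem aux_exp_matrix {p : ℕ} (hp : 0 < p) (A : Matrix (Fin p) (Fin p) ℝ)
    (hB : ∀ μ ∈ spectrum ℂ (A.map Complex.ofReal), μ.re < 0) :
    Tendsto (fun t : ℝ => NormedSpace.exp (t • A)) atTop (𝓝 0) := by
  have : Nonempty (Fin p) := ⟨⟨0, hp⟩⟩
  let : NormedAlgebra ℚ (Matrix (Fin p) (Fin p) ℂ) := NormedAlgebra.restrictScalars ℚ ℂ _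
  let : NormedAlgebra ℚ (Matrix (Fin p) (Fin p) ℝ) := NormedAlgebra.restrictScalars ℚ ℝ _
  have h1 := aux_exp_tendsto _ (aux_pow_tendsto _ (aux_spec_exp hB))
  have hcont : Continuous (fun M : Matrix (Fin p) (Fin p) ℂ => M.map Complex.re) :=
    Continuous.matrix_map continuous_id Complex.continuous_re
  have h2 := (hcont.tendsto 0).comp h1
  have h0 : (0 : Matrix (Fin p) (Fin p) ℂ).map Complex.re = 0 := by ext; simp
  rw [h0] at h2
  refine h2.congr fun t => ?_
  have hcont2 : Continuous (Complex.ofRealHom.mapMatrix :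
      Matrix (Fin p) (Fin p) ℝ →+* Matrix (Fin p) (Fin p) ℂ) :=
    Continuous.matrix_map continuous_id Complex.continuous_ofReal
  have h3 := NormedSpace.map_exp (Complex.ofRealHom.mapMatrix :
      Matrix (Fin p) (Fin p) ℝ →+* Matrix (Fin p) (Fin p) ℂ) hcont2 (t • A)
  have h4 : (Complex.ofRealHom.mapMatrix :
      Matrix (Fin p) (Fin p) ℝ →+* Matrix (Fin p) (Fin p) ℂ) (t • A)
      = (t : ℂ) • A.map Complex.ofReal := by
    ext i j; simp
  rw [h4] at h3
  simp only [Function.comp]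
  rw [← h3]
  ext i j
  simp
  rfl
end

theorem aux_const {p : ℕ} {Γ : Matrix (Fin p) (Fin p) ℝ} (hI : IsInterconnection Γ)
    {k : Fin p} (hk : ∀ i : Fin p, Relation.ReflTransGen (fun a b => 0 < Γ a b) i k)
    (w : Fin p → ℝ) (hw : Γ *ᵥ w = 0) : ∀ i, w i ≤ w k := by
  have : Nonempty (Fin p) := ⟨k⟩
  obtain ⟨m, hm⟩ := Finite.exists_max w
  have key : ∀ i, Relation.ReflTransGen (fun a b => 0 < Γ a b) m i → w i = w m := by
    intro i hi
    induction hi with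
    | refl => rfl
    | @tail b c _ hbc ih =>
      by_cases hcb : b = c
      · rw [← hcb, ih]
      have h1 : ∑ j, Γ b j * (w m - w j) = 0 := by
        have h2 : ∑ j, Γ b j * w j = 0 := congrFun hw b
        simp only [mul_sub, Finset.sum_sub_distrib, ← Finset.sum_mul, hI.2 b, h2]
        simp
      have h3 := (Finset.sum_eq_zero_iff_of_nonneg (fun j _ => by
        by_cases hj : b = j
        · rw [← hj, ih]; simp
        · exact mul_nonneg (hI.1 b j hj) (sub_nonneg.mpr (hm j)))).mp h1 c (Finset.mem_univ _)
      rcases mul_eq_zero.mp h3 with h | h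
      · exact absurd h hbc.ne'
      · linarith
  intro i
  rw [key k (hk m)]
  exact hm i

theorem aux_gersh {p : ℕ} {Γ : Matrix (Fin p) (Fin p) ℝ} (hI : IsInterconnection Γ)
    {μ : ℂ} {v : Fin p → ℂ} (hv0 : v ≠ 0) (hv : Γ.map Complex.ofReal *ᵥ v = μ • v)
    (hμ : 0 ≤ μ.re) : μ = 0 := by
  obtain ⟨i0, hi0⟩ := Function.ne_iff.mp hv0
  have : Nonempty (Fin p) := ⟨i0⟩
  obtain ⟨m, hm⟩ := Finite.exists_max (fun i => ‖v i‖)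
  have hpos : 0 < ‖v m‖ := (norm_pos_iff.mpr hi0).trans_le (hm i0)
  have h1 : ∑ j, (Γ m j : ℂ) * v j = μ * v m := congrFun hv m
  rw [← Finset.add_sum_erase _ _ (Finset.mem_univ m)] at h1
  have h2 := hI.2 m
  rw [← Finset.add_sum_erase _ _ (Finset.mem_univ m)] at h2
  have h3 : (μ - Γ m m) * v m = ∑ j ∈ Finset.univ.erase m, (Γ m j : ℂ) * v j := by
    linear_combination -h1
  have h4 : ‖μ - Γ m m‖ * ‖v m‖ ≤ (-Γ m m) * ‖v m‖ := by
    rw [← norm_mul, h3]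
    refine (norm_sum_le _ _).trans ?_
    have : -Γ m m = ∑ j ∈ Finset.univ.erase m, Γ m j := by linarith
    rw [this, Finset.sum_mul]
    refine Finset.sum_le_sum fun j hj => ?_
    have hg : 0 ≤ Γ m j := hI.1 m j (Finset.ne_of_mem_erase hj).symm
    rw [norm_mul, Complex.norm_real, Real.norm_of_nonneg hg]
    exact mul_le_mul_of_nonneg_left (hm j) hg
  have h5 := le_of_mul_le_mul_right h4 hpos
  have h6 : ‖μ - Γ m m‖ ^ 2 ≤ (-Γ m m) ^ 2 := by gcongr
  have h7 : 0 ≤ -Γ m m := (norm_nonneg _).trans h5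
  rw [← Complex.normSq_eq_norm_sq, Complex.normSq_apply] at h6
  simp only [Complex.sub_re, Complex.sub_im, Complex.ofReal_re, Complex.ofReal_im, sub_zero] at h6
  have h8 := mul_nonneg hμ h7
  have h9 : μ.re = 0 := by nlinarith [sq_nonneg μ.im, sq_nonneg μ.re]
  have h10 : μ.im = 0 := by nlinarith [sq_nonneg μ.im, sq_nonneg μ.re]
  exact Complex.ext h9 h10

theorem aux_spec {p : ℕ} (Γ : Matrix (Fin p) (Fin p) ℝ) (hΓ : IsConnectedInterconnection Γ)
    (r : Fin p → ℝ) (hr : r ᵥ* Γ = 0) (hr1 : ∑ i, r i = 1) :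
    ∀ μ ∈ spectrum ℂ ((Γ - vecMulVec (fun _ => (1 : ℝ)) r).map Complex.ofReal), μ.re < 0 := by
  intro μ hμ
  obtain ⟨v, hv0, hv⟩ := aux_eigvec hμ
  obtain ⟨hI, k, hk⟩ := hΓ
  have hc : ∀ i, ∑ j, (Γ i j : ℂ) * v j - ∑ j, (r j : ℂ) * v j = μ * v i := by
    intro i
    have := congrFun hv i
    simpa [mulVec, dotProduct, sub_mul, Finset.sum_sub_distrib, vecMulVec_apply] using this
  have hrc : ∀ j, ∑ i, (r i : ℂ) * Γ i j = 0 := fun j => by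
    have : ∑ i, r i * Γ i j = 0 := congrFun hr j
    exact_mod_cast this
  have hr1c : ∑ i, (r i : ℂ) = 1 := by exact_mod_cast hr1
  set s := ∑ j, (r j : ℂ) * v j with hs
  have h1 : -s = μ * s := by
    have h2 : ∑ i, (r i : ℂ) * (∑ j, (Γ i j : ℂ) * v j - s) = ∑ i, (r i : ℂ) * (μ * v i) :=
      Finset.sum_congr rfl fun i _ => by rw [hc i]
    have h3 : ∑ i, (r i : ℂ) * ∑ j, (Γ i j : ℂ) * v j = 0 := by
      simp_rw [Finset.mul_sum]
      rw [Finset.sum_comm]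
      simp_rw [← mul_assoc, ← Finset.sum_mul, hrc]
      simp
    simp_rw [mul_sub] at h2
    rw [Finset.sum_sub_distrib, h3, ← Finset.sum_mul, hr1c] at h2
    rw [hs, Finset.mul_sum, ← hs]
    simp_rw [mul_left_comm μ]
    rw [← h2]; ring
  by_cases hs0 : s = 0
  · by_contra! hre
    have hvΓ : Γ.map Complex.ofReal *ᵥ v = μ • v := by
      ext i
      have := hc i
      rw [hs0, sub_zero] at this
      exact this
    have hμ0 := aux_gersh hI hv0 hvΓ hre
    have hz : ∀ i, ∑ j, (Γ i j : ℂ) * v j = 0 := fun i => by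
      have := hc i
      rwa [hs0, sub_zero, hμ0, zero_mul] at this
    have hR : Γ *ᵥ (fun i => (v i).re) = 0 := by
      ext i
      simpa [mulVec, dotProduct] using congrArg Complex.re (hz i)
    have hM : Γ *ᵥ (fun i => (v i).im) = 0 := by
      ext i
      simpa [mulVec, dotProduct] using congrArg Complex.im (hz i)
    have hneg : ∀ w : Fin p → ℝ, Γ *ᵥ w = 0 → ∀ i, w i = w k := fun w hw i => by
      have h5 := aux_const hI hk w hw i
      have h6 := aux_const hI hk (-w) (by rw [mulVec_neg, hw, neg_zero]) i
      simp only [Pi.neg_apply] at h6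
      linarith
    have hvc : ∀ i, v i = v k := fun i => Complex.ext (hneg _ hR i) (hneg _ hM i)
    have hsk : s = v k := by
      rw [hs]
      simp_rw [hvc, ← Finset.sum_mul, hr1c, one_mul]
    apply hv0
    ext i
    rw [hvc i, ← hsk, hs0]; rfl
  · have : μ = -1 := mul_right_cancel₀ hs0 (by rw [← h1]; ring)
    rw [this]; simp

/-- For a connected interconnection `Γ` with `rᵀΓ = 0`, `rᵀ1 = 1`, the matrix `Γ - 1rᵀ`
is Hurwitz: every eigenvalue over `ℂ` has strictly negative real part; equivalently,
`exp(t(Γ - 1rᵀ)) → 0` as `t → ∞`. -/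
theorem gamma_sub_one_rT_hurwitz
    (p : ℕ) (Γ : Matrix (Fin p) (Fin p) ℝ) (hΓ : IsConnectedInterconnection Γ)
    (r : Fin p → ℝ) (hr : r ᵥ* Γ = 0) (hr1 : ∑ i, r i = 1) :
    (∀ μ ∈ spectrum ℂ ((Γ - vecMulVec (fun _ => (1 : ℝ)) r).map Complex.ofReal), μ.re < 0) ∧
    Tendsto (fun t : ℝ =>
        NormedSpace.exp (t • (Γ - vecMulVec (fun _ => (1 : ℝ)) r)))
      atTop (nhds 0) := by
  have h := aux_spec Γ hΓ r hr hr1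
  obtain ⟨k, _⟩ := hΓ.2
  exact ⟨h, aux_exp_matrix k.pos _ h⟩
end

section
/- Let Γ ∈ ℝ^{p×p}, let r ∈ ℝ^p satisfy rᵀΓ = 0, and let S, M ∈ ℝ^{n×n}. Then for every t ∈ ℝ, (1rᵀ ⊗ I_n) · exp(t(I_p ⊗ S + Γ ⊗ M)) = 1rᵀ ⊗ exp(tS). -/
open Matrix
open scoped Kronecker

theorem matrix_hasSum_exp_aux {m : Type*} [Fintype m] [DecidableEq m] (A : Matrix m m ℝ) :
    HasSum (fun k : ℕ => ((k.factorial : ℝ)⁻¹) • A ^ k) (NormedSpace.exp A) := by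
  let : NormedRing (Matrix m m ℝ) := Matrix.linftyOpNormedRing
  let : NormedAlgebra ℝ (Matrix m m ℝ) := Matrix.linftyOpNormedAlgebra
  exact NormedSpace.exp_series_hasSum_exp' (𝕂 := ℝ) A

/-- If `rᵀΓ = 0`, then `(1rᵀ ⊗ I_n) exp(t(I_p ⊗ S + Γ ⊗ M)) = 1rᵀ ⊗ exp(tS)`. -/
theorem one_rT_kron_exp
    (p n : ℕ) (Γ : Matrix (Fin p) (Fin p) ℝ)
    (r : Fin p → ℝ) (hr : r ᵥ* Γ = 0)
    (S M : Matrix (Fin n) (Fin n) ℝ) (t : ℝ) :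
    ((vecMulVec (fun _ => (1 : ℝ)) r : Matrix (Fin p) (Fin p) ℝ)
          ⊗ₖ (1 : Matrix (Fin n) (Fin n) ℝ))
        * NormedSpace.exp (t • ((1 : Matrix (Fin p) (Fin p) ℝ) ⊗ₖ S + Γ ⊗ₖ M))
      = (vecMulVec (fun _ => (1 : ℝ)) r : Matrix (Fin p) (Fin p) ℝ)
          ⊗ₖ NormedSpace.exp (t • S) := by
  set J : Matrix (Fin p) (Fin p) ℝ := vecMulVec (fun _ => (1 : ℝ)) r with hJ
  have hJΓ : J * Γ = 0 := by
    rw [hJ, vecMulVec_mul, hr]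
    ext i j
    simp [vecMulVec_apply]
  have hpow : ∀ k : ℕ, (J ⊗ₖ (1 : Matrix (Fin n) (Fin n) ℝ))
      * (t • ((1 : Matrix (Fin p) (Fin p) ℝ) ⊗ₖ S + Γ ⊗ₖ M)) ^ k = J ⊗ₖ ((t • S) ^ k) := by
    intro k
    induction k with
    | zero => simp only [pow_zero, mul_one]
    | succ k ih =>
      rw [pow_succ, ← mul_assoc, ih, mul_smul_comm, mul_add, ← mul_kronecker_mul,
        ← mul_kronecker_mul, hJΓ, zero_kronecker, add_zero, mul_one, pow_succ, mul_smul_comm,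
        kronecker_smul]
  have h1 := (matrix_hasSum_exp_aux
    (t • ((1 : Matrix (Fin p) (Fin p) ℝ) ⊗ₖ S + Γ ⊗ₖ M))).mul_left
      (J ⊗ₖ (1 : Matrix (Fin n) (Fin n) ℝ))
  have hc : Continuous (fun X : Matrix (Fin n) (Fin n) ℝ => J ⊗ₖ X) := by
    refine continuous_matrix fun i j => ?_
    simp only [kroneckerMap_apply]
    exact continuous_const.mul (continuous_id.matrix_elem _ _)
  let f : Matrix (Fin n) (Fin n) ℝ →+ Matrix (Fin p × Fin n) (Fin p × Fin n) ℝ :=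
    { toFun := fun X => J ⊗ₖ X
      map_zero' := kronecker_zero J
      map_add' := kronecker_add J }
  have h2 := (matrix_hasSum_exp_aux (t • S)).map f hc
  have he : (fun k : ℕ => (J ⊗ₖ (1 : Matrix (Fin n) (Fin n) ℝ)) * (((k.factorial : ℝ)⁻¹) •
      (t • ((1 : Matrix (Fin p) (Fin p) ℝ) ⊗ₖ S + Γ ⊗ₖ M)) ^ k))
      = (f ∘ fun k : ℕ => ((k.factorial : ℝ)⁻¹) • (t • S) ^ k) := by
    funext k
    change _ = J ⊗ₖ _
    rw [mul_smul_comm, hpow, kronecker_smul]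
  rw [he] at h1
  exact h1.unique h2
end

section
/- Let A = [[0,1],[0,0]] ∈ ℝ^{2×2} and C = [1 0] ∈ ℝ^{1×2} (a detectable pair with A having a double eigenvalue at 0). There is no L ∈ ℝ^{2×1} such that for every p, every connected interconnection Γ ∈ ℝ^{p×p}, and every initial vector x(0) ∈ ℝ^{2p}, the 2-dimensional blocks x_i(t) of x(t) = exp(t(I_p ⊗ A + Γ ⊗ LC)) x(0) synchronize; i.e., for every L ∈ ℝ^{2×1} there exist p, a connected interconnection Γ ∈ ℝ^{p×p}, x(0) ∈ ℝ^{2p}, and indices i, j such that |x_i(t) − x_j(t)| does not tend to 0 as t → ∞. -/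
open Matrix Filter Topology
open scoped Kronecker

section helper
attribute [local instance] Matrix.linftyOpNormedRing Matrix.linftyOpNormedAlgebra

theorem exp_mulVec_aux {n : Type} [Fintype n] [DecidableEq n] (M : Matrix n n ℝ) (v : n → ℂ) (s : ℂ)
    (h : ∀ k, ∑ j, (M k j : ℂ) * v j = s * v k) (φ : ℂ →L[ℝ] ℝ) (t : ℝ) (k : n) :
    (NormedSpace.exp (t • M) *ᵥ (fun j => φ (v j))) k = φ (Complex.exp (t * s) * v k) := by
  have hpow : ∀ m : ℕ, ∀ k, (M ^ m *ᵥ (fun j => φ (v j))) k = φ (s ^ m * v k) := by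
    intro m
    induction m with
    | zero => intro k; simp
    | succ m ih =>
      intro k
      rw [pow_succ', ← Matrix.mulVec_mulVec]
      have : (M ^ m *ᵥ (fun j => φ (v j))) = fun k => φ (s ^ m * v k) := funext ih
      rw [this]
      have e : s ^ (m + 1) * v k = ∑ j, M k j • (s ^ m * v j) := by
        rw [pow_succ, mul_assoc, ← h k, Finset.mul_sum]
        refine Finset.sum_congr rfl fun j _ => ?_
        rw [Complex.real_smul]; ring
      rw [e, map_sum]
      simp only [map_smul, smul_eq_mul]
      rfl
  have h1 := NormedSpace.exp_series_hasSum_exp' (𝕂 := ℝ) (t • M)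
  let ψ : Matrix n n ℝ →ₗ[ℝ] ℝ :=
    { toFun := fun N => (N *ᵥ (fun j => φ (v j))) k
      map_add' := by intro a b; simp [Matrix.add_mulVec]
      map_smul' := by intro a b; simp [Matrix.smul_mulVec] }
  have hψ : Continuous ψ := ψ.continuous_of_finiteDimensional
  have h2 := h1.map ψ hψ
  have h3 := NormedSpace.exp_series_hasSum_exp' (𝕂 := ℝ) ((t : ℂ) * s)
  rw [← Complex.exp_eq_exp_ℂ] at h3
  have h4 := (h3.mul_right (v k)).map φ φ.continuous
  refine h2.unique ?_
  convert h4 using 1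
  funext m
  simp only [Function.comp]
  rw [map_smul, smul_pow, map_smul, smul_mul_assoc, map_smul]
  congr 1
  change t ^ m • (M ^ m *ᵥ (fun j => φ (v j))) k = _
  rw [hpow, mul_pow, mul_assoc, ← Complex.ofReal_pow, ← Complex.real_smul, map_smul]

end helper

/-- circulant interconnection on three nodes -/
def circ (a b : ℝ) : Matrix (Fin 3) (Fin 3) ℝ :=
  !![-(a+b), a, b; b, -(a+b), a; a, b, -(a+b)]

theorem circ_conn (a b : ℝ) (ha : 0 < a) (hb : 0 ≤ b) : IsConnectedInterconnection (circ a b) := by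
  refine ⟨⟨?_, ?_⟩, 0, ?_⟩
  · intro i j hij
    fin_cases i <;> fin_cases j <;> simp [circ] at hij ⊢ <;> linarith
  · intro i
    fin_cases i <;> simp [circ, Fin.sum_univ_three] <;> ring
  · have h2 : Relation.ReflTransGen (fun x y => 0 < circ a b x y) 2 0 :=
      Relation.ReflTransGen.single (by simpa [circ] using ha)
    intro i
    fin_cases i
    · exact Relation.ReflTransGen.refl
    · exact Relation.ReflTransGen.head (b := 2) (by simpa [circ] using ha) h2
    · exact h2

theorem exists_params (l m : ℝ) (ω : ℂ) (hω : ω = ⟨-1/2, √3/2⟩) :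
    ∃ (a b : ℝ) (s : ℂ), 0 < a ∧ 0 ≤ b ∧ 0 ≤ s.re ∧
      s ^ 2 = (a * (ω - 1) + b * (ω ^ 2 - 1)) * (l * s + m) := by
  have h3 : √3 * √3 = 3 := Real.mul_self_sqrt (by norm_num)
  have h3p : 0 < √3 := by positivity
  have hsum : ω + ω ^ 2 = -1 := by
    subst hω
    apply Complex.ext <;> simp [pow_two] <;> nlinarith
  by_cases hl : 0 < l ∧ 0 < m
  · obtain ⟨hl, hm⟩ := hl
    refine ⟨m / (6 * l ^ 2), 0, ⟨0, m / (√3 * l)⟩, by positivity, le_rfl, le_rfl, ?_⟩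
    subst hω
    have hc : ((m / (6 * l ^ 2) : ℝ) : ℂ) = ⟨m / (6 * l ^ 2), 0⟩ := rfl
    rw [hc]
    have e : m / (√3 * l) = √3 * m / (3 * l) := by
      rw [div_eq_div_iff (by positivity) (by positivity)]; linear_combination (-(m * l)) * h3
    rw [e]
    apply Complex.ext
    · simp [pow_two]
      field_simp
      linear_combination (-9 : ℝ) * h3
    · simp [pow_two]
      field_simp
      ring
  · have key : ∃ d : ℂ, d ^ 2 = 9 * l ^ 2 - 12 * m ∧ 3 * l ≤ d.re := by
      by_cases hl0 : l ≤ 0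
      · obtain ⟨d, hd⟩ := IsAlgClosed.exists_pow_nat_eq (9 * (l : ℂ) ^ 2 - 12 * m) (n := 2) (by norm_num)
        rcases le_total 0 d.re with h | h
        · exact ⟨d, hd, by linarith⟩
        · exact ⟨-d, by rw [neg_sq, hd], by simp; linarith⟩
      · have hm : m ≤ 0 := by by_contra hm; exact hl ⟨by linarith, by linarith⟩
        refine ⟨((√(9 * l ^ 2 - 12 * m) : ℝ) : ℂ), ?_, ?_⟩
        · rw [← Complex.ofReal_pow, Real.sq_sqrt (by nlinarith)]; push_cast; rfl
        · rw [Complex.ofReal_re]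
          exact Real.le_sqrt_of_sq_le (by nlinarith)
    obtain ⟨d, hd, hre⟩ := key
    refine ⟨1, 1, (d - (3 * l : ℝ)) / (2 : ℝ), one_pos, zero_le_one, ?_, ?_⟩
    · rw [Complex.div_ofReal_re, Complex.sub_re, Complex.ofReal_re]; linarith
    · push_cast
      linear_combination (1 / 4 : ℂ) * hd - (l * ((d - 3 * l) / 2) + m) * hsum

/-- For the detectable pair `A = [[0,1],[0,0]]`, `C = [1 0]` (a double integrator observed
through its first state), no feedback `L ∈ ℝ^{2×1}` synchronizes the array for all connected
interconnections: for every `L` there exist `p`, a connected interconnection `Γ`, an initial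
condition `x(0)` and indices `i, j` whose blocks fail to synchronize. -/
theorem double_integrator_not_synchronizable :
    ∀ L : Matrix (Fin 2) (Fin 1) ℝ,
      ∃ (p : ℕ) (Γ : Matrix (Fin p) (Fin p) ℝ), IsConnectedInterconnection Γ ∧
        ∃ (x0 : Fin p × Fin 2 → ℝ) (i j : Fin p),
          ¬ Tendsto (fun t : ℝ => (fun k : Fin 2 =>
                (NormedSpace.exp (t • ((1 : Matrix (Fin p) (Fin p) ℝ) ⊗ₖ !![(0 : ℝ), 1; 0, 0]
                    + Γ ⊗ₖ (L * !![(1 : ℝ), 0]))) *ᵥ x0) (i, k)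
                  - (NormedSpace.exp (t • ((1 : Matrix (Fin p) (Fin p) ℝ) ⊗ₖ !![(0 : ℝ), 1; 0, 0]
                    + Γ ⊗ₖ (L * !![(1 : ℝ), 0]))) *ᵥ x0) (j, k)))
              atTop (nhds 0) := by
  intro L
  obtain ⟨ω, hω⟩ : ∃ ω : ℂ, ω = ⟨-1/2, √3/2⟩ := ⟨_, rfl⟩
  obtain ⟨a, b, s, ha, hb, hs, hroot⟩ := exists_params (L 0 0) (L 1 0) ω hω
  have h3 : √3 * √3 = 3 := Real.mul_self_sqrt (by norm_num)
  have hsum : ω + ω ^ 2 = -1 := by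
    rw [hω]
    apply Complex.ext <;> simp [pow_two] <;> nlinarith
  have hcube : ω ^ 3 = 1 := by linear_combination (ω - 1) * hsum
  have hne : ω ≠ 1 := by
    rw [hω]; intro h
    have := congrArg Complex.re h
    norm_num at this
  refine ⟨3, circ a b, circ_conn a b ha hb, ?_⟩
  by_contra hcon
  push Not at hcon
  set M := ((1 : Matrix (Fin 3) (Fin 3) ℝ) ⊗ₖ !![(0 : ℝ), 1; 0, 0]
                    + circ a b ⊗ₖ (L * !![(1 : ℝ), 0])) with hM
  set lam : ℂ := a * (ω - 1) + b * (ω ^ 2 - 1) with hlam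
  let v : Fin 3 × Fin 2 → ℂ := fun q => ω ^ (q.1 : ℕ) * (![1, s - lam * L 0 0] q.2)
  have hv : ∀ k, ∑ j, (M k j : ℂ) * v j = s * v k := by
    rintro ⟨i, k⟩
    rw [Fintype.sum_prod_type]
    fin_cases i <;> fin_cases k <;>
      simp [hM, v, Fin.sum_univ_three, circ, Matrix.mul_apply, Matrix.one_apply]
    · linear_combination -(L 0 0 : ℂ) * hlam
    · linear_combination -(L 1 0 : ℂ) * hlam - hroot
    · linear_combination -ω * (L 0 0 : ℂ) * hlam - b * (L 0 0 : ℂ) * hcube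
    · linear_combination -ω * (L 1 0 : ℂ) * hlam - ω * hroot - b * (L 1 0 : ℂ) * hcube
    · linear_combination -ω ^ 2 * (L 0 0 : ℂ) * hlam - (a + b * ω) * (L 0 0 : ℂ) * hcube
    · linear_combination -ω ^ 2 * (L 1 0 : ℂ) * hlam - ω ^ 2 * hroot - (a + b * ω) * (L 1 0 : ℂ) * hcube
  have hφ : ∀ φ : ℂ →L[ℝ] ℝ,
      Tendsto (fun t : ℝ => φ (Complex.exp (t * s) * (1 - ω))) atTop (nhds 0) := by
    intro φ
    have h := (tendsto_pi_nhds.1 (hcon (fun j => φ (v j)) 0 1)) 0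
    refine h.congr fun t => ?_
    rw [exp_mulVec_aux M v s hv, exp_mulVec_aux M v s hv, ← map_sub]
    congr 1
    simp [v]; ring
  have hC : Tendsto (fun t : ℝ => Complex.exp (t * s) * (1 - ω)) atTop (nhds 0) := by
    have := ((Complex.continuous_ofReal.tendsto 0).comp (hφ Complex.reCLM)).add
      (((Complex.continuous_ofReal.tendsto 0).comp (hφ Complex.imCLM)).mul_const Complex.I)
    simp only [Complex.ofReal_zero, zero_mul, add_zero] at this
    refine this.congr fun t => ?_
    exact Complex.re_add_im _
  have hN := hC.norm
  rw [norm_zero] at hN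
  have hpos : 0 < ‖1 - ω‖ := norm_pos_iff.2 (sub_ne_zero.2 hne.symm)
  have hge : ∀ᶠ t : ℝ in atTop, ‖1 - ω‖ ≤ ‖Complex.exp (t * s) * (1 - ω)‖ := by
    filter_upwards [eventually_ge_atTop 0] with t ht
    rw [norm_mul, Complex.norm_exp]
    have : 1 ≤ Real.exp ((t * s : ℂ).re) := by
      apply Real.one_le_exp
      rw [Complex.re_ofReal_mul]; positivity
    nlinarith
  exact absurd (ge_of_tendsto hN hge) (not_le.2 hpos)
end

section
/- Consider the scalar pair C = 1, A = 1 (so n = m = 1 and the coupled array with feedback L ∈ ℝ evolves as x(t) = exp(t(I_p + LΓ)) x(0) for an interconnection Γ ∈ ℝ^{p×p}). There is no L ∈ ℝ such that for every p, every connected interconnection Γ ∈ ℝ^{p×p}, and every x(0) ∈ ℝ^p, the components x_i(t) of x(t) = exp(t(I_p + LΓ)) x(0) synchronize. Indeed, for every L ∈ ℝ there exists ε > 0 with 1 − εL > 0 such that for the connected interconnection Γ = [[−ε, ε],[0, 0]] ∈ ℝ^{2×2} and any x(0) with x₁(0) ≠ x₂(0), one has x₁(t) − x₂(t) = e^{(1−εL)t}(x₁(0)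 − x₂(0)), which does not tend to 0. -/
open Matrix Filter Topology
open scoped Kronecker

theorem exp_diff_aux (L ε t : ℝ) (x0 : Fin 2 → ℝ) :
    (NormedSpace.exp (t • ((1 : Matrix (Fin 2) (Fin 2) ℝ) + L • !![-ε, ε; 0, 0])) *ᵥ x0) 0
      - (NormedSpace.exp (t • ((1 : Matrix (Fin 2) (Fin 2) ℝ) + L • !![-ε, ε; 0, 0])) *ᵥ x0) 1
      = Real.exp ((1 - ε * L) * t) * (x0 0 - x0 1) := by
  let U : (Matrix (Fin 2) (Fin 2) ℝ)ˣ :=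
    ⟨!![1, 1; 0, 1], !![1, -1; 0, 1],
      by ext i j; fin_cases i <;> fin_cases j <;> simp [Matrix.mul_apply, Fin.sum_univ_two],
      by ext i j; fin_cases i <;> fin_cases j <;> simp [Matrix.mul_apply, Fin.sum_univ_two]⟩
  have hM : t • ((1 : Matrix (Fin 2) (Fin 2) ℝ) + L • !![-ε, ε; 0, 0])
      = (U : Matrix (Fin 2) (Fin 2) ℝ) * Matrix.diagonal ![(1 - ε * L) * t, t]
        * ((U⁻¹ : (Matrix (Fin 2) (Fin 2) ℝ)ˣ) : Matrix (Fin 2) (Fin 2) ℝ) := by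
    change _ = !![1, 1; 0, 1] * _ * !![1, -1; 0, 1]
    ext i j
    fin_cases i <;> fin_cases j <;>
      simp [Matrix.mul_apply, Fin.sum_univ_two, Matrix.vecMul_diagonal] <;> ring
  rw [hM, Matrix.exp_units_conj, Matrix.exp_diagonal]
  change ((!![1, 1; 0, 1] * _ * !![1, -1; 0, 1]) *ᵥ x0) 0
    - ((!![1, 1; 0, 1] * _ * !![1, -1; 0, 1]) *ᵥ x0) 1 = _
  simp [Matrix.mul_apply, Matrix.mulVec, dotProduct, Fin.sum_univ_two, Matrix.vecMul_diagonal,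
    Pi.coe_exp, ← Real.exp_eq_exp_ℝ]
  ring

theorem exp_not_tendsto_aux (L ε : ℝ) (h : 0 < 1 - ε * L) (x0 : Fin 2 → ℝ) (hx : x0 0 ≠ x0 1) :
    ¬ Tendsto (fun t : ℝ =>
      |(NormedSpace.exp (t • ((1 : Matrix (Fin 2) (Fin 2) ℝ) + L • !![-ε, ε; 0, 0])) *ᵥ x0) 0
        - (NormedSpace.exp (t • ((1 : Matrix (Fin 2) (Fin 2) ℝ) + L • !![-ε, ε; 0, 0])) *ᵥ x0) 1|)
      atTop (nhds 0) := by
  intro hT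
  simp only [exp_diff_aux] at hT
  have hpos : 0 < |x0 0 - x0 1| := abs_pos.mpr (sub_ne_zero.mpr hx)
  have hle : |x0 0 - x0 1| ≤ 0 := by
    refine ge_of_tendsto hT ?_
    filter_upwards [eventually_ge_atTop (0 : ℝ)] with t ht
    rw [abs_mul, abs_of_pos (Real.exp_pos _)]
    exact le_mul_of_one_le_left hpos.le (Real.one_le_exp (mul_nonneg h.le ht))
  linarith

theorem connected_aux (ε : ℝ) (hε : 0 < ε) : IsConnectedInterconnection !![-ε, ε; 0, 0] := by
  refine ⟨⟨?_, ?_⟩, 1, ?_⟩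
  · intro i j hij
    fin_cases i <;> fin_cases j <;> simp_all [hε.le]
  · intro i
    fin_cases i <;> simp [Fin.sum_univ_two]
  · intro i
    fin_cases i
    · exact Relation.ReflTransGen.single (by simpa using hε)
    · exact Relation.ReflTransGen.refl

theorem eps_aux (L : ℝ) : ∃ ε : ℝ, 0 < ε ∧ 0 < 1 - ε * L := by
  have h : 0 < 1 + |L| := by positivity
  refine ⟨(1 + |L|)⁻¹, inv_pos.mpr h, ?_⟩
  have h2 : (1 + |L|)⁻¹ * L < 1 := by
    rw [inv_mul_lt_iff₀ h]
    linarith [le_abs_self L]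
  linarith

/-- For the scalar pair `C = 1`, `A = 1` there is no feedback `L ∈ ℝ` synchronizing the
array `x(t) = exp(t(I_p + LΓ)) x(0)` for every connected interconnection `Γ`; indeed for
every `L` there is `ε > 0` with `1 - εL > 0` such that for the connected interconnection
`Γ = [[-ε, ε], [0, 0]]` one has `x₁(t) - x₂(t) = e^{(1-εL)t}(x₁(0) - x₂(0))`, which does not
tend to `0` when `x₁(0) ≠ x₂(0)`. -/
theorem scalar_unstable_not_synchronizable :
    (¬ ∃ L : ℝ, ∀ (p : ℕ) (Γ : Matrix (Fin p) (Fin p) ℝ), IsConnectedInterconnection Γ →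
        ∀ (x0 : Fin p → ℝ) (i j : Fin p),
          Tendsto (fun t : ℝ =>
              |(NormedSpace.exp (t • ((1 : Matrix (Fin p) (Fin p) ℝ) + L • Γ)) *ᵥ x0) i
                - (NormedSpace.exp (t • ((1 : Matrix (Fin p) (Fin p) ℝ) + L • Γ)) *ᵥ x0) j|)
            atTop (nhds 0)) ∧
    ∀ L : ℝ, ∃ ε : ℝ, 0 < ε ∧ 0 < 1 - ε * L ∧
      IsConnectedInterconnection !![-ε, ε; 0, 0] ∧
      ∀ x0 : Fin 2 → ℝ,
        (∀ t : ℝ,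
          (NormedSpace.exp (t • ((1 : Matrix (Fin 2) (Fin 2) ℝ) + L • !![-ε, ε; 0, 0]))
              *ᵥ x0) 0
            - (NormedSpace.exp (t • ((1 : Matrix (Fin 2) (Fin 2) ℝ) + L • !![-ε, ε; 0, 0]))
              *ᵥ x0) 1
          = Real.exp ((1 - ε * L) * t) * (x0 0 - x0 1)) ∧
        (x0 0 ≠ x0 1 →
          ¬ Tendsto (fun t : ℝ =>
              |(NormedSpace.exp (t • ((1 : Matrix (Fin 2) (Fin 2) ℝ) + L • !![-ε, ε; 0, 0]))
                  *ᵥ x0) 0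
                - (NormedSpace.exp (t • ((1 : Matrix (Fin 2) (Fin 2) ℝ) + L • !![-ε, ε; 0, 0]))
                  *ᵥ x0) 1|)
            atTop (nhds 0)) := by
  refine ⟨?_, ?_⟩
  · rintro ⟨L, hL⟩
    obtain ⟨ε, hε, h⟩ := eps_aux L
    exact exp_not_tendsto_aux L ε h ![1, 0] (by simp)
      (hL 2 _ (connected_aux ε hε) ![1, 0] 0 1)
  · intro L
    obtain ⟨ε, hε, h⟩ := eps_aux L
    exact ⟨ε, hε, h, connected_aux ε hε, fun x0 =>
      ⟨fun t => exp_diff_aux L ε t x0, exp_not_tendsto_aux L ε h x0⟩⟩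
end
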